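/- Suppose the matrix Q = 2Q_ww + 2K_ywᵀ(I − K_yy)ᵀ P (I − K_yy) K_yw is positive definite; define F = Q^{−1} R with R = Q_wy + Q_ywᵀ + 2K_ywᵀ(I − K_yy)ᵀ P K_yy, and q = (Q_wu + Q_uwᵀ) ψ_u + c_w + K_ywᵀ(I − K_yy)ᵀ p + [2K_ywᵀ(I − K_yy)ᵀ P (I − K_yy) K_yx + Q_wx + Q_xwᵀ] ψ_x. Assume the Riccati equation P = K_yyᵀ P K_yy − (1/2) Fᵀ Q F + Q_yy holds, and that p satisfies (I − K_yy)ᵀ p = −Fᵀ q + (Q_yx + Q_xyᵀ + 2K_yyᵀ P (I − K_yy) K_yx) ψ_x + (Q_yu + Q_uyᵀ) ψ_u + c_y. Then the value function V(ψ_y) = ψ_yᵀ P ψ_y + pᵀ ψ_y satisfies the Bellman equation up to a constant: the function ψ_y ↦ (min over ψ_w of G(ψ_y, ψ_w)) − V(ψ_y) is constant on ℝ^{n_y}, and the minimum in ψ_w is attained uniquely at ψ_w = −F ψ_y − Q^{−1} q. -/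

import Mathlib

open Matrix Filter

noncomputable section

/-- The next-state map
`ψ_y⁺(ψ_y, ψ_w) = K_yy (ψ_y − K_yx ψ_x − K_yw ψ_w) + K_yx ψ_x + K_yw ψ_w`. -/
def nextY {nx ny nw : ℕ}
    (Kyy : Matrix (Fin ny) (Fin ny) ℝ) (Kyx : Matrix (Fin ny) (Fin nx) ℝ)
    (Kyw : Matrix (Fin ny) (Fin nw) ℝ) (ψx : Fin nx → ℝ)
    (py : Fin ny → ℝ) (pw : Fin nw → ℝ) : Fin ny → ℝ :=
  Kyy.mulVec (py - Kyx.mulVec ψx - Kyw.mulVec pw) + Kyx.mulVec ψx + Kyw.mulVec pw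

/-- The Bellman right-hand side
`G(ψ_y, ψ_w) = Σ_{i,j} ψ_iᵀ Q_{ij} ψ_j + Σ_i c_iᵀ ψ_i + c_0 + ψ_y⁺ᵀ P ψ_y⁺ + pᵀ ψ_y⁺`,
where `ψ_y⁺ = ψ_y⁺(ψ_y, ψ_w)` and the variables `x`, `u` are held at `ψ_x`, `ψ_u`. -/
def bellmanG {nx ny nw nu : ℕ}
    (Kyy : Matrix (Fin ny) (Fin ny) ℝ) (Kyx : Matrix (Fin ny) (Fin nx) ℝ)
    (Kyw : Matrix (Fin ny) (Fin nw) ℝ)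
    (Qxx : Matrix (Fin nx) (Fin nx) ℝ) (Qxy : Matrix (Fin nx) (Fin ny) ℝ)
    (Qxw : Matrix (Fin nx) (Fin nw) ℝ) (Qxu : Matrix (Fin nx) (Fin nu) ℝ)
    (Qyx : Matrix (Fin ny) (Fin nx) ℝ) (Qyy : Matrix (Fin ny) (Fin ny) ℝ)
    (Qyw : Matrix (Fin ny) (Fin nw) ℝ) (Qyu : Matrix (Fin ny) (Fin nu) ℝ)
    (Qwx : Matrix (Fin nw) (Fin nx) ℝ) (Qwy : Matrix (Fin nw) (Fin ny) ℝ)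
    (Qww : Matrix (Fin nw) (Fin nw) ℝ) (Qwu : Matrix (Fin nw) (Fin nu) ℝ)
    (Qux : Matrix (Fin nu) (Fin nx) ℝ) (Quy : Matrix (Fin nu) (Fin ny) ℝ)
    (Quw : Matrix (Fin nu) (Fin nw) ℝ) (Quu : Matrix (Fin nu) (Fin nu) ℝ)
    (cx : Fin nx → ℝ) (cy : Fin ny → ℝ) (cw : Fin nw → ℝ) (cu : Fin nu → ℝ)
    (c0 : ℝ) (ψx : Fin nx → ℝ) (ψu : Fin nu → ℝ)
    (P : Matrix (Fin ny) (Fin ny) ℝ) (p : Fin ny → ℝ)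
    (py : Fin ny → ℝ) (pw : Fin nw → ℝ) : ℝ :=
  ψx ⬝ᵥ Qxx.mulVec ψx + ψx ⬝ᵥ Qxy.mulVec py + ψx ⬝ᵥ Qxw.mulVec pw +
    ψx ⬝ᵥ Qxu.mulVec ψu +
  py ⬝ᵥ Qyx.mulVec ψx + py ⬝ᵥ Qyy.mulVec py + py ⬝ᵥ Qyw.mulVec pw +
    py ⬝ᵥ Qyu.mulVec ψu +
  pw ⬝ᵥ Qwx.mulVec ψx + pw ⬝ᵥ Qwy.mulVec py + pw ⬝ᵥ Qww.mulVec pw +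
    pw ⬝ᵥ Qwu.mulVec ψu +
  ψu ⬝ᵥ Qux.mulVec ψx + ψu ⬝ᵥ Quy.mulVec py + ψu ⬝ᵥ Quw.mulVec pw +
    ψu ⬝ᵥ Quu.mulVec ψu +
  cx ⬝ᵥ ψx + cy ⬝ᵥ py + cw ⬝ᵥ pw + cu ⬝ᵥ ψu + c0 +
  nextY Kyy Kyx Kyw ψx py pw ⬝ᵥ P.mulVec (nextY Kyy Kyx Kyw ψx py pw) +
  p ⬝ᵥ nextY Kyy Kyx Kyw ψx py pw

/-!
The Bellman right-hand side is a quadratic polynomial in `(ψ_y, ψ_w)`, since the stage cost is one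
and the next-state map is affine. Its Hessian in `ψ_w` is `Q`, its mixed block is `R = Q F`, and its
linear term in `ψ_w` is `q`, so completing the square in `ψ_w` gives
`½ (ψ_w + F ψ_y + Q⁻¹ q)ᵀ Q (ψ_w + F ψ_y + Q⁻¹ q)` plus a quadratic polynomial in `ψ_y`. The Riccati
equation says that the quadratic part of the latter is `P`, and the equation for `p` says that its
linear part is `p`.
-/

section BlockQuadratic

variable {𝕜 m n k : Type*} [Fintype m] [Fintype n] [Fintype k]

theorem dotProduct_mulVec_comm_of_isSymm [CommSemiring 𝕜] {A : Matrix n n 𝕜} (hA : A.IsSymm)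
    (v w : n → 𝕜) : v ⬝ᵥ A *ᵥ w = w ⬝ᵥ A *ᵥ v := by
  simpa only [hA.eq] using dotProduct_transpose_mulVec A v w

/-- The quadratic polynomial in a pair of vectors `(y, w)` with quadratic blocks `A` (in `y`),
`R` (mixed) and `Q` (in `w`), linear parts `a` and `q`, and constant term `c`. The factor `1 / 2`
makes a symmetric `Q` the Hessian in `w`, whereas `A` carries no such factor. -/
def blockQuadratic [Field 𝕜] (A : Matrix n n 𝕜) (R : Matrix m n 𝕜) (Q : Matrix m m 𝕜)
    (a : n → 𝕜) (q : m → 𝕜) (c : 𝕜) (y : n → 𝕜) (w : m → 𝕜) : 𝕜 :=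
  y ⬝ᵥ A *ᵥ y + w ⬝ᵥ R *ᵥ y + 1 / 2 * (w ⬝ᵥ Q *ᵥ w) + a ⬝ᵥ y + q ⬝ᵥ w + c

theorem blockQuadratic_add [Field 𝕜] (A A' : Matrix n n 𝕜) (R R' : Matrix m n 𝕜)
    (Q Q' : Matrix m m 𝕜) (a a' : n → 𝕜) (q q' : m → 𝕜) (c c' : 𝕜) (y : n → 𝕜) (w : m → 𝕜) :
    blockQuadratic (A + A') (R + R') (Q + Q') (a + a') (q + q') (c + c') y w =
      blockQuadratic A R Q a q c y w + blockQuadratic A' R' Q' a' q' c' y w := by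
  simp only [blockQuadratic, add_mulVec, dotProduct_add, add_dotProduct]
  ring

theorem dotProduct_mulVec_affine_eq_blockQuadratic [Field 𝕜] [NeZero (2 : 𝕜)]
    {P : Matrix k k 𝕜} (hP : P.IsSymm) (p : k → 𝕜) (B : Matrix k n 𝕜) (D : Matrix k m 𝕜)
    (e : k → 𝕜) (y : n → 𝕜) (w : m → 𝕜) :
    (B *ᵥ y + D *ᵥ w + e) ⬝ᵥ P *ᵥ (B *ᵥ y + D *ᵥ w + e) + p ⬝ᵥ (B *ᵥ y + D *ᵥ w + e) =
      blockQuadratic (Bᵀ * P * B) ((2 : 𝕜) • (Dᵀ * P * B)) ((2 : 𝕜) • (Dᵀ * P * D))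
        (Bᵀ *ᵥ ((2 : 𝕜) • P *ᵥ e + p)) (Dᵀ *ᵥ ((2 : 𝕜) • P *ᵥ e + p))
        (e ⬝ᵥ P *ᵥ e + p ⬝ᵥ e) y w := by
  have hyw := dotProduct_mulVec_comm_of_isSymm hP (B *ᵥ y) (D *ᵥ w)
  have hye := dotProduct_mulVec_comm_of_isSymm hP (B *ᵥ y) e
  have hwe := dotProduct_mulVec_comm_of_isSymm hP (D *ᵥ w) e
  simp only [blockQuadratic, dotProduct_comm (Bᵀ *ᵥ _), dotProduct_comm (Dᵀ *ᵥ _), smul_mulVec,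
    ← mulVec_mulVec, dotProduct_transpose_mulVec, dotProduct_comm (P *ᵥ _), mulVec_add,
    dotProduct_add, add_dotProduct, smul_dotProduct, dotProduct_smul, smul_eq_mul]
  rw [one_div, inv_mul_cancel_left₀ two_ne_zero]
  linear_combination hyw - hye - hwe

section CompletingTheSquare

variable {R : Matrix m n 𝕜} {Q : Matrix m m 𝕜} {F : Matrix m n 𝕜} {q s : m → 𝕜}

theorem blockQuadratic_eq_add_sq [Field 𝕜] [NeZero (2 : 𝕜)] (hQ : Q.IsSymm) (hF : Q * F = R)
    (hs : Q *ᵥ s = q) (A : Matrix n n 𝕜) (a : n → 𝕜) (c : 𝕜) (y : n → 𝕜) (w : m → 𝕜) :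
    blockQuadratic A R Q a q c y w =
      y ⬝ᵥ (A - (1 / 2 : 𝕜) • (Fᵀ * Q * F)) *ᵥ y + (a - Fᵀ *ᵥ q) ⬝ᵥ y + (c - 1 / 2 * (q ⬝ᵥ s)) +
        1 / 2 * ((w - (-(F *ᵥ y) - s)) ⬝ᵥ Q *ᵥ (w - (-(F *ᵥ y) - s))) := by
  have hz : w - (-(F *ᵥ y) - s) = w + F *ᵥ y + s := by abel
  have hwy := dotProduct_mulVec_comm_of_isSymm hQ (F *ᵥ y) w
  have hsw := dotProduct_mulVec_comm_of_isSymm hQ s w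
  have hsy := dotProduct_mulVec_comm_of_isSymm hQ s (F *ᵥ y)
  subst hF hs
  simp only [blockQuadratic, hz, sub_mulVec, smul_mulVec, ← mulVec_mulVec, mulVec_add,
    dotProduct_add, add_dotProduct, dotProduct_sub, sub_dotProduct, dotProduct_smul, smul_eq_mul,
    dotProduct_comm (Fᵀ *ᵥ _), dotProduct_comm (Q *ᵥ _), dotProduct_transpose_mulVec]
  field_simp
  linear_combination -hwy - hsw - hsy

theorem blockQuadratic_argmin [Field 𝕜] [NeZero (2 : 𝕜)] (hQ : Q.IsSymm) (hF : Q * F = R)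
    (hs : Q *ᵥ s = q) (A : Matrix n n 𝕜) (a : n → 𝕜) (c : 𝕜) (y : n → 𝕜) :
    blockQuadratic A R Q a q c y (-(F *ᵥ y) - s) =
      y ⬝ᵥ (A - (1 / 2 : 𝕜) • (Fᵀ * Q * F)) *ᵥ y + (a - Fᵀ *ᵥ q) ⬝ᵥ y +
        (c - 1 / 2 * (q ⬝ᵥ s)) := by
  simp [blockQuadratic_eq_add_sq hQ hF hs]

variable [Field 𝕜] [LinearOrder 𝕜] [IsStrictOrderedRing 𝕜] [StarRing 𝕜] [TrivialStar 𝕜]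

theorem blockQuadratic_argmin_lt (hQ : Q.PosDef) (hF : Q * F = R) (hs : Q *ᵥ s = q)
    (A : Matrix n n 𝕜) (a : n → 𝕜) (c : 𝕜) {y : n → 𝕜} {w : m → 𝕜} (hw : w ≠ -(F *ᵥ y) - s) :
    blockQuadratic A R Q a q c y (-(F *ᵥ y) - s) < blockQuadratic A R Q a q c y w := by
  have hQsymm : Q.IsSymm := isHermitian_iff_isSymm.1 hQ.isHermitian
  have hpos := hQ.dotProduct_mulVec_pos (sub_ne_zero.2 hw)
  rw [star_trivial] at hpos
  rw [blockQuadratic_argmin hQsymm hF hs, blockQuadratic_eq_add_sq hQsymm hF hs]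
  linarith

theorem blockQuadratic_argmin_le (hQ : Q.PosDef) (hF : Q * F = R) (hs : Q *ᵥ s = q)
    (A : Matrix n n 𝕜) (a : n → 𝕜) (c : 𝕜) (y : n → 𝕜) (w : m → 𝕜) :
    blockQuadratic A R Q a q c y (-(F *ᵥ y) - s) ≤ blockQuadratic A R Q a q c y w := by
  obtain rfl | hw := eq_or_ne w (-(F *ᵥ y) - s)
  · rfl
  · exact (blockQuadratic_argmin_lt hQ hF hs A a c hw).le

end CompletingTheSquare

theorem iInf_blockQuadratic {R : Matrix m n ℝ} {Q : Matrix m m ℝ} {F : Matrix m n ℝ} {q s : m → ℝ}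
    (hQ : Q.PosDef) (hF : Q * F = R) (hs : Q *ᵥ s = q)
    (A : Matrix n n ℝ) (a : n → ℝ) (c : ℝ) (y : n → ℝ) :
    ⨅ w, blockQuadratic A R Q a q c y w =
      y ⬝ᵥ (A - (1 / 2 : ℝ) • (Fᵀ * Q * F)) *ᵥ y + (a - Fᵀ *ᵥ q) ⬝ᵥ y +
        (c - 1 / 2 * (q ⬝ᵥ s)) := by
  have hleast : IsLeast (Set.range (blockQuadratic A R Q a q c y)) _ :=
    ⟨Set.mem_range_self (-(F *ᵥ y) - s),
      Set.forall_mem_range.2 (blockQuadratic_argmin_le hQ hF hs A a c y)⟩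
  rw [hleast.isGLB.ciInf_eq,
    blockQuadratic_argmin (isHermitian_iff_isSymm.1 hQ.isHermitian) hF hs]

end BlockQuadratic

section Bellman

variable {nx ny nw nu : ℕ}
  (Kyy : Matrix (Fin ny) (Fin ny) ℝ) (Kyx : Matrix (Fin ny) (Fin nx) ℝ)
  (Kyw : Matrix (Fin ny) (Fin nw) ℝ)
  (Qxx : Matrix (Fin nx) (Fin nx) ℝ) (Qxy : Matrix (Fin nx) (Fin ny) ℝ)
  (Qxw : Matrix (Fin nx) (Fin nw) ℝ) (Qxu : Matrix (Fin nx) (Fin nu) ℝ)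
  (Qyx : Matrix (Fin ny) (Fin nx) ℝ) (Qyy : Matrix (Fin ny) (Fin ny) ℝ)
  (Qyw : Matrix (Fin ny) (Fin nw) ℝ) (Qyu : Matrix (Fin ny) (Fin nu) ℝ)
  (Qwx : Matrix (Fin nw) (Fin nx) ℝ) (Qwy : Matrix (Fin nw) (Fin ny) ℝ)
  (Qww : Matrix (Fin nw) (Fin nw) ℝ) (Qwu : Matrix (Fin nw) (Fin nu) ℝ)
  (Qux : Matrix (Fin nu) (Fin nx) ℝ) (Quy : Matrix (Fin nu) (Fin ny) ℝ)
  (Quw : Matrix (Fin nu) (Fin nw) ℝ) (Quu : Matrix (Fin nu) (Fin nu) ℝ)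
  (cx : Fin nx → ℝ) (cy : Fin ny → ℝ) (cw : Fin nw → ℝ) (cu : Fin nu → ℝ)
  (c0 : ℝ) (ψx : Fin nx → ℝ) (ψu : Fin nu → ℝ)
  {P : Matrix (Fin ny) (Fin ny) ℝ} (p : Fin ny → ℝ)
  (py : Fin ny → ℝ) (pw : Fin nw → ℝ)

theorem nextY_eq_affine :
    nextY Kyy Kyx Kyw ψx py pw =
      Kyy *ᵥ py + ((1 - Kyy) * Kyw) *ᵥ pw + ((1 - Kyy) * Kyx) *ᵥ ψx := by
  simp only [nextY, ← mulVec_mulVec, mulVec_sub, sub_mulVec, one_mulVec]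
  abel

theorem bellmanG_eq_blockQuadratic_add_nextY :
    bellmanG Kyy Kyx Kyw Qxx Qxy Qxw Qxu Qyx Qyy Qyw Qyu Qwx Qwy Qww Qwu
        Qux Quy Quw Quu cx cy cw cu c0 ψx ψu P p py pw =
      blockQuadratic Qyy (Qwy + Qywᵀ) ((2 : ℝ) • Qww)
          ((Qyx + Qxyᵀ) *ᵥ ψx + (Qyu + Quyᵀ) *ᵥ ψu + cy)
          ((Qwx + Qxwᵀ) *ᵥ ψx + (Qwu + Quwᵀ) *ᵥ ψu + cw)
          (ψx ⬝ᵥ Qxx *ᵥ ψx + ψx ⬝ᵥ Qxu *ᵥ ψu + ψu ⬝ᵥ Qux *ᵥ ψx + ψu ⬝ᵥ Quu *ᵥ ψu +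
            cx ⬝ᵥ ψx + cu ⬝ᵥ ψu + c0) py pw +
        (nextY Kyy Kyx Kyw ψx py pw ⬝ᵥ P *ᵥ nextY Kyy Kyx Kyw ψx py pw +
          p ⬝ᵥ nextY Kyy Kyx Kyw ψx py pw) := by
  simp only [bellmanG, blockQuadratic, add_mulVec, smul_mulVec, dotProduct_add, add_dotProduct,
    dotProduct_smul, smul_eq_mul, dotProduct_comm (_ *ᵥ _), dotProduct_transpose_mulVec]
  ring

theorem exists_bellmanG_eq_blockQuadratic (hP : P.IsSymm) :
    ∃ c : ℝ, ∀ py pw,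
      bellmanG Kyy Kyx Kyw Qxx Qxy Qxw Qxu Qyx Qyy Qyw Qyu Qwx Qwy Qww Qwu
        Qux Quy Quw Quu cx cy cw cu c0 ψx ψu P p py pw =
      blockQuadratic (Kyyᵀ * P * Kyy + Qyy)
        (Qwy + Qywᵀ + (2 : ℝ) • (Kywᵀ * (1 - Kyy)ᵀ * P * Kyy))
        ((2 : ℝ) • Qww + (2 : ℝ) • (Kywᵀ * (1 - Kyy)ᵀ * P * (1 - Kyy) * Kyw))
        (Kyyᵀ *ᵥ p + (Qyx + Qxyᵀ + (2 : ℝ) • (Kyyᵀ * P * (1 - Kyy) * Kyx)) *ᵥ ψx +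
          (Qyu + Quyᵀ) *ᵥ ψu + cy)
        ((Qwu + Quwᵀ) *ᵥ ψu + cw + (Kywᵀ * (1 - Kyy)ᵀ) *ᵥ p +
          ((2 : ℝ) • (Kywᵀ * (1 - Kyy)ᵀ * P * (1 - Kyy) * Kyx) + Qwx + Qxwᵀ) *ᵥ ψx)
        c py pw := by
  let e := ((1 - Kyy) * Kyx) *ᵥ ψx
  refine ⟨ψx ⬝ᵥ Qxx *ᵥ ψx + ψx ⬝ᵥ Qxu *ᵥ ψu + ψu ⬝ᵥ Qux *ᵥ ψx + ψu ⬝ᵥ Quu *ᵥ ψu +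
    cx ⬝ᵥ ψx + cu ⬝ᵥ ψu + c0 + (e ⬝ᵥ P *ᵥ e + p ⬝ᵥ e), fun py pw => ?_⟩
  rw [bellmanG_eq_blockQuadratic_add_nextY, nextY_eq_affine,
    dotProduct_mulVec_affine_eq_blockQuadratic hP, ← blockQuadratic_add]
  congr 1
  · exact add_comm _ _
  · simp only [transpose_mul]
  · simp only [transpose_mul, Matrix.mul_assoc]
  · simp only [mulVec_add, add_mulVec, mulVec_smul, smul_mulVec, mulVec_mulVec, Matrix.mul_assoc]
    abel
  · simp only [transpose_mul, mulVec_add, add_mulVec, mulVec_smul, smul_mulVec, mulVec_mulVec,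
      Matrix.mul_assoc]
    abel

end Bellman

/-- Suppose `Q = 2Q_ww + 2K_ywᵀ(I − K_yy)ᵀ P (I − K_yy) K_yw` is
positive definite, `F = Q⁻¹ R` with `R = Q_wy + Q_ywᵀ + 2K_ywᵀ(I − K_yy)ᵀ P K_yy`,
`q = (Q_wu + Q_uwᵀ) ψ_u + c_w + K_ywᵀ(I − K_yy)ᵀ p +
[2K_ywᵀ(I − K_yy)ᵀ P (I − K_yy) K_yx + Q_wx + Q_xwᵀ] ψ_x`, the Riccati equation
`P = K_yyᵀ P K_yy − (1/2) Fᵀ Q F + Q_yy` holds, and `p` satisfies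
`(I − K_yy)ᵀ p = −Fᵀ q + (Q_yx + Q_xyᵀ + 2K_yyᵀ P (I − K_yy) K_yx) ψ_x +
(Q_yu + Q_uyᵀ) ψ_u + c_y`.  Then `V(ψ_y) = ψ_yᵀ P ψ_y + pᵀ ψ_y` satisfies the
Bellman equation up to a constant: `ψ_y ↦ (min_{ψ_w} G(ψ_y, ψ_w)) − V(ψ_y)` is
constant, and the minimum in `ψ_w` is attained uniquely at `ψ_w = −F ψ_y − Q⁻¹ q`. -/
theorem bellman_value_function {nx ny nw nu : ℕ}
    (Kyy : Matrix (Fin ny) (Fin ny) ℝ) (Kyx : Matrix (Fin ny) (Fin nx) ℝ)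
    (Kyw : Matrix (Fin ny) (Fin nw) ℝ)
    (Qxx : Matrix (Fin nx) (Fin nx) ℝ) (Qxy : Matrix (Fin nx) (Fin ny) ℝ)
    (Qxw : Matrix (Fin nx) (Fin nw) ℝ) (Qxu : Matrix (Fin nx) (Fin nu) ℝ)
    (Qyx : Matrix (Fin ny) (Fin nx) ℝ) (Qyy : Matrix (Fin ny) (Fin ny) ℝ)
    (Qyw : Matrix (Fin ny) (Fin nw) ℝ) (Qyu : Matrix (Fin ny) (Fin nu) ℝ)
    (Qwx : Matrix (Fin nw) (Fin nx) ℝ) (Qwy : Matrix (Fin nw) (Fin ny) ℝ)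
    (Qww : Matrix (Fin nw) (Fin nw) ℝ) (Qwu : Matrix (Fin nw) (Fin nu) ℝ)
    (Qux : Matrix (Fin nu) (Fin nx) ℝ) (Quy : Matrix (Fin nu) (Fin ny) ℝ)
    (Quw : Matrix (Fin nu) (Fin nw) ℝ) (Quu : Matrix (Fin nu) (Fin nu) ℝ)
    (cx : Fin nx → ℝ) (cy : Fin ny → ℝ) (cw : Fin nw → ℝ) (cu : Fin nu → ℝ)
    (c0 : ℝ) (ψx : Fin nx → ℝ) (ψu : Fin nu → ℝ)
    (P : Matrix (Fin ny) (Fin ny) ℝ) (p : Fin ny → ℝ)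
    (hQww : Qww.IsSymm) (hQyy : Qyy.IsSymm) (hP : P.IsSymm)
    (Q : Matrix (Fin nw) (Fin nw) ℝ)
    (hQ : Q = (2 : ℝ) • Qww +
      (2 : ℝ) • (Kywᵀ * (1 - Kyy)ᵀ * P * (1 - Kyy) * Kyw))
    (hQpos : Q.PosDef)
    (F : Matrix (Fin nw) (Fin ny) ℝ)
    (hF : F = Q⁻¹ * (Qwy + Qywᵀ + (2 : ℝ) • (Kywᵀ * (1 - Kyy)ᵀ * P * Kyy)))
    (q : Fin nw → ℝ)
    (hq : q = (Qwu + Quwᵀ).mulVec ψu + cw + (Kywᵀ * (1 - Kyy)ᵀ).mulVec p +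
      ((2 : ℝ) • (Kywᵀ * (1 - Kyy)ᵀ * P * (1 - Kyy) * Kyx) + Qwx + Qxwᵀ).mulVec ψx)
    (hRiccati : P = Kyyᵀ * P * Kyy - (1 / 2 : ℝ) • (Fᵀ * Q * F) + Qyy)
    (hp : (1 - Kyy)ᵀ.mulVec p =
      -(Fᵀ.mulVec q) +
        (Qyx + Qxyᵀ + (2 : ℝ) • (Kyyᵀ * P * (1 - Kyy) * Kyx)).mulVec ψx +
        (Qyu + Quyᵀ).mulVec ψu + cy) :
    (∃ C : ℝ, ∀ py : Fin ny → ℝ,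
      (⨅ pw : Fin nw → ℝ,
        bellmanG Kyy Kyx Kyw Qxx Qxy Qxw Qxu Qyx Qyy Qyw Qyu Qwx Qwy Qww Qwu
          Qux Quy Quw Quu cx cy cw cu c0 ψx ψu P p py pw) -
        (py ⬝ᵥ P.mulVec py + p ⬝ᵥ py) = C) ∧
    (∀ py : Fin ny → ℝ,
      (∀ pw : Fin nw → ℝ,
        bellmanG Kyy Kyx Kyw Qxx Qxy Qxw Qxu Qyx Qyy Qyw Qyu Qwx Qwy Qww Qwu
            Qux Quy Quw Quu cx cy cw cu c0 ψx ψu P p py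
            (-(F.mulVec py) - Q⁻¹.mulVec q) ≤
          bellmanG Kyy Kyx Kyw Qxx Qxy Qxw Qxu Qyx Qyy Qyw Qyu Qwx Qwy Qww Qwu
            Qux Quy Quw Quu cx cy cw cu c0 ψx ψu P p py pw) ∧
      (∀ pw : Fin nw → ℝ,
        (∀ pw' : Fin nw → ℝ,
          bellmanG Kyy Kyx Kyw Qxx Qxy Qxw Qxu Qyx Qyy Qyw Qyu Qwx Qwy Qww Qwu
              Qux Quy Quw Quu cx cy cw cu c0 ψx ψu P p py pw ≤
            bellmanG Kyy Kyx Kyw Qxx Qxy Qxw Qxu Qyx Qyy Qyw Qyu Qwx Qwy Qww Qwu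
              Qux Quy Quw Quu cx cy cw cu c0 ψx ψu P p py pw') →
        pw = -(F.mulVec py) - Q⁻¹.mulVec q)) := by
  have hdet : IsUnit Q.det := (isUnit_iff_isUnit_det Q).1 hQpos.isUnit
  have hQF : Q * F = Qwy + Qywᵀ + (2 : ℝ) • (Kywᵀ * (1 - Kyy)ᵀ * P * Kyy) := by
    rw [hF, mul_nonsing_inv_cancel_left _ _ hdet]
  have hQq : Q *ᵥ Q⁻¹ *ᵥ q = q := by
    rw [mulVec_mulVec, mul_nonsing_inv _ hdet, one_mulVec]
  obtain ⟨c, hG⟩ := exists_bellmanG_eq_blockQuadratic Kyy Kyx Kyw Qxx Qxy Qxw Qxu Qyx Qyy Qyw Qyu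
    Qwx Qwy Qww Qwu Qux Quy Quw Quu cx cy cw cu c0 ψx ψu p hP
  simp only [hG, ← hQ, ← hq]
  have hA : Kyyᵀ * P * Kyy + Qyy - (1 / 2 : ℝ) • (Fᵀ * Q * F) = P := by
    rw [add_sub_right_comm, ← hRiccati]
  have ha : Kyyᵀ *ᵥ p + (Qyx + Qxyᵀ + (2 : ℝ) • (Kyyᵀ * P * (1 - Kyy) * Kyx)) *ᵥ ψx +
      (Qyu + Quyᵀ) *ᵥ ψu + cy - Fᵀ *ᵥ q = p := by
    rw [transpose_sub, transpose_one, sub_mulVec, one_mulVec] at hp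
    linear_combination (norm := module) -hp
  refine ⟨⟨c - 1 / 2 * (q ⬝ᵥ Q⁻¹ *ᵥ q), fun y => ?_⟩, fun y =>
    ⟨blockQuadratic_argmin_le hQpos hQF hQq _ _ c y, fun w hw => ?_⟩⟩
  · rw [iInf_blockQuadratic hQpos hQF hQq, hA, ha, add_sub_cancel_left]
  · by_contra hne
    exact (hw _).not_gt (blockQuadratic_argmin_lt hQpos hQF hQq _ _ c hne)
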